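/- Let q(D) denote the minimum size of a quasi-kernel of a digraph D. Then the sequence q(D_n)/|V(D_n)| converges to 1/2 as n → ∞. -/

import Mathlib

/-!
The minimum size of a quasi-kernel of `D_n` is exactly `n² + 1`, so the ratio is
`(n² + 1) / (2n² + 3n + 1)`, which tends to `1/2`.

The vertices `k_i` form a rotational tournament, hence an independent set contains at most one
of them. A quasi-kernel contains at least one, because no arc leaves the tournament. If it is
`k_i`, then every pendant `s_{lj}` with `k_i → k_l` is farther than two steps from `k_i`, so it
must be a member itself; there are `n · n` such pendants. Conversely, `k_0` together with the
pendants at its `n` out-neighbours is a quasi-kernel.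
-/

def Indep {V : Type*} (A : V → V → Prop) (Q : Finset V) : Prop :=
  ∀ u ∈ Q, ∀ v ∈ Q, u ≠ v → ¬ A u v

def QuasiKernel {V : Type*} (A : V → V → Prop) (Q : Finset V) : Prop :=
  Indep A Q ∧
    ∀ v : V, v ∈ Q ∨ (∃ q ∈ Q, A v q) ∨ (∃ w : V, ∃ q ∈ Q, A v w ∧ A w q)

abbrev DnVert (n : ℕ) := Fin (2 * n + 1) ⊕ (Fin (2 * n + 1) × Fin n)

def DnArc (n : ℕ) : DnVert n → DnVert n → Prop
  | Sum.inl i, Sum.inl i' =>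
      ∃ j : ℕ, 1 ≤ j ∧ j ≤ n ∧ (i' : ℕ) = ((i : ℕ) + j) % (2 * n + 1)
  | Sum.inr p, Sum.inl i' => i' = p.1
  | _, _ => False

/-- The minimum size of a quasi-kernel of `D_n`. -/
noncomputable def qDn (n : ℕ) : ℕ :=
  sInf {k : ℕ | ∃ Q : Finset (DnVert n), QuasiKernel (DnArc n) Q ∧ Q.card = k}

/-- The arc relation inside the tournament as linear inequalities, with no residues. -/
lemma arc_inl_inl {n : ℕ} (i l : Fin (2 * n + 1)) :
    DnArc n (Sum.inl i) (Sum.inl l) ↔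
      ((i : ℕ) < l ∧ (l : ℕ) ≤ i + n) ∨ (l : ℕ) + n + 1 ≤ i := by
  have hi := i.isLt
  have hl := l.isLt
  simp only [DnArc]
  constructor
  · rintro ⟨j, h1, h2, h3⟩
    rcases lt_or_ge ((i : ℕ) + j) (2 * n + 1) with h | h
    · rw [Nat.mod_eq_of_lt h] at h3
      omega
    · rw [Nat.mod_eq_sub_mod h, Nat.mod_eq_of_lt (by omega)] at h3
      omega
  · rintro (h | h)
    · refine ⟨l - i, by omega, by omega, ?_⟩
      rw [Nat.mod_eq_of_lt (by omega)]
      omega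
    · refine ⟨l + (2 * n + 1) - i, by omega, by omega, ?_⟩
      rw [Nat.mod_eq_sub_mod (by omega), Nat.mod_eq_of_lt (by omega)]
      omega

/-- The index `i + a + 1` modulo `2n + 1`: the `a`-th out-neighbour of `k_i`, counting from `0`. -/
def outNbr {n : ℕ} (i : Fin (2 * n + 1)) (a : Fin n) : Fin (2 * n + 1) :=
  ⟨if (i : ℕ) + a + 1 < 2 * n + 1 then i + a + 1 else i + a + 1 - (2 * n + 1), by
    have := i.isLt
    have := a.isLt
    split_ifs <;> omega⟩

lemma outNbr_injective {n : ℕ} (i : Fin (2 * n + 1)) : Function.Injective (outNbr i) := by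
  intro a b h
  have ha := a.isLt
  have hb := b.isLt
  simp only [outNbr, Fin.mk.injEq] at h
  ext
  split_ifs at h <;> omega

lemma arc_outNbr {n : ℕ} (i : Fin (2 * n + 1)) (a : Fin n) :
    DnArc n (Sum.inl i) (Sum.inl (outNbr i a)) := by
  have hi := i.isLt
  have ha := a.isLt
  rw [arc_inl_inl]
  simp only [outNbr]
  split_ifs <;> omega

/-- The set consisting of `k_i` and all pendant vertices attached to out-neighbours of `k_i`. -/
def core {n : ℕ} (i : Fin (2 * n + 1)) : Finset (DnVert n) :=
  insert (Sum.inl i)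
    (Finset.univ.image fun p : Fin n × Fin n => Sum.inr (outNbr i p.1, p.2))

lemma card_core {n : ℕ} (i : Fin (2 * n + 1)) : (core i).card = n ^ 2 + 1 := by
  rw [core, Finset.card_insert_of_notMem (by simp), Finset.card_image_of_injective]
  · simp [sq]
  · rintro ⟨a, j⟩ ⟨b, k⟩ h
    simp only [Sum.inr.injEq, Prod.mk.injEq] at h
    rw [outNbr_injective i h.1, h.2]

lemma exists_inl_mem {n : ℕ} {Q : Finset (DnVert n)} (hQ : QuasiKernel (DnArc n) Q) :
    ∃ i, Sum.inl i ∈ Q := by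
  rcases hQ.2 (Sum.inl 0) with h | ⟨q, hq, h⟩ | ⟨w, q, hq, -, h⟩
  · exact ⟨0, h⟩
  · rcases q with q | q
    · exact ⟨q, hq⟩
    · simp [DnArc] at h
  · rcases q with q | q
    · exact ⟨q, hq⟩
    · rcases w with w | w <;> simp [DnArc] at h

lemma core_subset {n : ℕ} {Q : Finset (DnVert n)} (hQ : QuasiKernel (DnArc n) Q)
    {i : Fin (2 * n + 1)} (hi : Sum.inl i ∈ Q) : core i ⊆ Q := by
  -- Two vertices of the tournament are always adjacent, so `k_i` is the only one in `Q`.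
  have huniq : ∀ l, Sum.inl l ∈ Q → l = i := by
    intro l hl
    by_contra hne
    have h1 := hQ.1 _ hl _ hi (by simpa using hne)
    have h2 := hQ.1 _ hi _ hl (by simpa using Ne.symm hne)
    rw [arc_inl_inl] at h1 h2
    have : (l : ℕ) ≠ i := fun h => hne (Fin.ext h)
    omega
  intro v hv
  simp only [core, Finset.mem_insert, Finset.mem_image, Finset.mem_univ, true_and] at hv
  rcases hv with rfl | ⟨⟨a, j⟩, rfl⟩
  · exact hi
  have harc := arc_outNbr i a
  rw [arc_inl_inl] at harc
  rcases hQ.2 (Sum.inr (outNbr i a, j)) with h | ⟨q, hq, h⟩ | ⟨w, q, hq, hw, h⟩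
  · exact h
  · rcases q with q | q
    · simp only [DnArc] at h
      have := huniq q hq
      subst h
      rw [this] at harc
      omega
    · simp [DnArc] at h
  · rcases w with w | w
    · simp only [DnArc] at hw
      subst hw
      rcases q with q | q
      · have := huniq q hq
        subst this
        rw [arc_inl_inl] at h
        omega
      · simp [DnArc] at h
    · simp [DnArc] at hw

lemma mem_core_zero {n : ℕ} (l : Fin (2 * n + 1)) (j : Fin n) (h1 : 1 ≤ (l : ℕ))
    (h2 : (l : ℕ) ≤ n) : Sum.inr (l, j) ∈ core (0 : Fin (2 * n + 1)) := by
  simp only [core, Finset.mem_insert, Finset.mem_image, Finset.mem_univ, true_and]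
  refine Or.inr ⟨(⟨l - 1, by omega⟩, j), ?_⟩
  simp only [Sum.inr.injEq, Prod.mk.injEq, and_true]
  ext
  simp only [outNbr, Fin.val_zero]
  exact (if_pos (by omega)).trans (by omega)

lemma quasiKernel_core_zero (n : ℕ) : QuasiKernel (DnArc n) (core 0) := by
  have h0 : (Sum.inl 0 : DnVert n) ∈ core (0 : Fin (2 * n + 1)) := by simp [core]
  refine ⟨?_, ?_⟩
  · intro u hu v hv hne h
    simp only [core, Finset.mem_insert, Finset.mem_image, Finset.mem_univ, true_and] at hu hv
    rcases hu with rfl | ⟨⟨a, j⟩, rfl⟩ <;> rcases hv with rfl | ⟨⟨b, k⟩, rfl⟩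
    · exact hne rfl
    · simp [DnArc] at h
    · have := arc_outNbr 0 a
      simp only [DnArc] at h
      rw [← h, arc_inl_inl] at this
      omega
    · simp [DnArc] at h
  · rintro (l | ⟨l, j⟩)
    · have hl := l.isLt
      rcases Nat.eq_zero_or_pos (l : ℕ) with hz | hp
      · obtain rfl : l = 0 := Fin.ext hz
        exact Or.inl h0
      · rcases le_or_gt (l : ℕ) n with h | h
        -- An out-neighbour `k_l` of `k_0` returns to it through `k_{l+n}`.
        · refine Or.inr (Or.inr ⟨Sum.inl ⟨l + n, by omega⟩, _, h0, ?_, ?_⟩) <;>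
            rw [arc_inl_inl] <;> simp only [Fin.val_zero] <;> omega
        · refine Or.inr (Or.inl ⟨_, h0, ?_⟩)
          rw [arc_inl_inl]
          simp only [Fin.val_zero]
          omega
    · rcases Nat.eq_zero_or_pos (l : ℕ) with hz | hp
      · obtain rfl : l = 0 := Fin.ext hz
        exact Or.inr (Or.inl ⟨_, h0, rfl⟩)
      · rcases le_or_gt (l : ℕ) n with h | h
        · exact Or.inl (mem_core_zero l j hp h)
        · refine Or.inr (Or.inr ⟨Sum.inl l, _, h0, rfl, ?_⟩)
          rw [arc_inl_inl]
          simp only [Fin.val_zero]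
          omega

lemma qDn_eq (n : ℕ) : qDn n = n ^ 2 + 1 := by
  refine IsLeast.csInf_eq ⟨⟨core 0, quasiKernel_core_zero n, card_core 0⟩, ?_⟩
  rintro k ⟨Q, hQ, rfl⟩
  obtain ⟨i, hi⟩ := exists_inl_mem hQ
  rw [← card_core i]
  exact Finset.card_le_card (core_subset hQ hi)

/-- `q(D_n)/|V(D_n)| → 1/2` as `n → ∞`. -/
theorem stmt7 :
    Filter.Tendsto (fun n : ℕ => (qDn n : ℝ) / (Fintype.card (DnVert n) : ℝ))
      Filter.atTop (nhds (1 / 2)) := by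
  have hinv := tendsto_inv_atTop_nhds_zero_nat (𝕜 := ℝ)
  have hlim : Filter.Tendsto
      (fun n : ℕ => (1 + ((n : ℝ)⁻¹) ^ 2) / (2 + 3 * (n : ℝ)⁻¹ + ((n : ℝ)⁻¹) ^ 2))
      Filter.atTop (nhds ((1 + 0 ^ 2) / (2 + 3 * 0 + 0 ^ 2))) :=
    ((hinv.pow 2).const_add 1).div (((hinv.const_mul 3).const_add 2).add (hinv.pow 2))
      (by norm_num)
  have hval : ((1 + 0 ^ 2) / (2 + 3 * 0 + 0 ^ 2) : ℝ) = 1 / 2 := by norm_num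
  rw [hval] at hlim
  refine hlim.congr' ?_
  filter_upwards [Filter.eventually_gt_atTop 0] with n hn
  have hn' : (0 : ℝ) < n := by exact_mod_cast hn
  have hcard : (Fintype.card (DnVert n) : ℝ) = 2 * (n : ℝ) ^ 2 + 3 * n + 1 := by
    simp only [DnVert, Fintype.card_sum, Fintype.card_prod, Fintype.card_fin]
    push_cast
    ring
  rw [qDn_eq, hcard]
  push_cast
  field_simp
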